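/- For every ρ < 2 there exist a number of agents n, a set of chores M = {1,…,m}, additive cost functions c_1,…,c_n on M, and responsibilities b_1,…,b_n with 0 < b_i < 1 and ∑_i b_i = 1, such that no assignment (S_1,…,S_n) of all chores satisfies c_i(S_i) ≤ ρ·MMS(c_i, b̌_i) for all agents i. Consequently, for every ρ < 2 the share ρ·MMS-bar is not feasible ex-post, and there is no feasible ex-post share for additive chores that ρ-dominates every feasible ex-post share. -/

import Mathlib

/-!
Take two agents and `2t` chores, each of cost `1` to both agents, with responsibilities
`b₀ = 1 - 1/(2t)` and `b₁ = 1/(2t)`. Then `⌈1/b₀⌉ = 2` and `⌈1/b₁⌉ = 2t`, so the shares are at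
most `t` and `1` (`MMSc_unit_two_le` and `MMSc_unit_self_le`). For `ρ < 2`, agent `1` can accept
at most one chore, so agent `0` is left with at least `2t - 1` chores, and this exceeds `ρ * t`
as soon as `t * (2 - ρ) > 1`.
-/

open Finset

noncomputable section

/-- Cost of a bundle under an additive cost function. -/
def bundleVal {m : ℕ} (c : Fin m → ℝ) (S : Finset (Fin m)) : ℝ := ∑ j ∈ S, c j

/-- A tuple of bundles partitions the items: pairwise disjoint and covering all items. -/
def IsPartition {n m : ℕ} (A : Fin n → Finset (Fin m)) : Prop :=
  (∀ i j : Fin n, i ≠ j → Disjoint (A i) (A j)) ∧ ∀ e : Fin m, ∃ i, e ∈ A i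

/-- Maximin share `MMS(c, 1/k)` for an additive cost function over chores:
the minimum over partitions into `k` bundles of the maximum bundle cost. -/
def MMSc {m : ℕ} (c : Fin m → ℝ) (k : ℕ) : ℝ :=
  ⨅ P : {P : Fin k → Finset (Fin m) // IsPartition P}, ⨆ j : Fin k, bundleVal c (P.1 j)

theorem bundleVal_nonneg {m : ℕ} {c : Fin m → ℝ} (hc : ∀ j, 0 ≤ c j) (S : Finset (Fin m)) :
    0 ≤ bundleVal c S :=
  Finset.sum_nonneg fun j _ => hc j

theorem MMSc_nonneg {m : ℕ} {c : Fin m → ℝ} (hc : ∀ j, 0 ≤ c j) (k : ℕ) : 0 ≤ MMSc c k :=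
  Real.iInf_nonneg fun _ => Real.iSup_nonneg fun _ => bundleVal_nonneg hc _

/-- Any partition witnesses an upper bound on the share. -/
theorem MMSc_le {m k : ℕ} {c : Fin m → ℝ} (hc : ∀ j, 0 ≤ c j) (P : Fin k → Finset (Fin m))
    (hP : IsPartition P) {B : ℝ} (hB : 0 ≤ B) (h : ∀ j, bundleVal c (P j) ≤ B) :
    MMSc c k ≤ B := by
  refine ciInf_le_of_le ⟨0, ?_⟩ ⟨P, hP⟩ (Real.iSup_le h hB)
  rintro _ ⟨Q, rfl⟩
  exact Real.iSup_nonneg fun _ => bundleVal_nonneg hc _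

theorem bundleVal_unit {m : ℕ} (S : Finset (Fin m)) :
    bundleVal (fun _ => (1 : ℝ)) S = (S.card : ℝ) := by
  simp [bundleVal]

theorem MMSc_unit_self_le (m : ℕ) : MMSc (fun _ : Fin m => (1 : ℝ)) m ≤ 1 := by
  refine MMSc_le (fun _ => zero_le_one) (fun j => {j}) ⟨?_, ?_⟩ zero_le_one ?_
  · intro i j hij
    simpa using hij
  · intro e
    exact ⟨e, by simp⟩
  · intro j
    simp [bundleVal_unit]

theorem MMSc_unit_two_le (t : ℕ) : MMSc (fun _ : Fin (t + t) => (1 : ℝ)) 2 ≤ t := by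
  -- The two bundles are the first `t` and the last `t` chores.
  refine MMSc_le (fun _ => zero_le_one)
    ![univ.map (Fin.castAddEmb t), univ.map (Fin.natAddEmb t)] ⟨?_, ?_⟩ (Nat.cast_nonneg t) ?_
  · have h : Disjoint (univ.map (Fin.castAddEmb t) : Finset (Fin (t + t)))
        (univ.map (Fin.natAddEmb t)) := by
      rw [Finset.disjoint_left]
      intro x hx hy
      simp only [Finset.mem_map, Finset.mem_univ, true_and] at hx hy
      obtain ⟨a, rfl⟩ := hx
      obtain ⟨b, hb⟩ := hy
      have := congrArg Fin.val hb
      simp at this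
      omega
    intro i j hij
    fin_cases i <;> fin_cases j
    · exact absurd rfl hij
    · exact h
    · exact h.symm
    · exact absurd rfl hij
  · intro e
    refine Fin.addCases (fun a => ⟨0, ?_⟩) (fun a => ⟨1, ?_⟩) e
    · exact Finset.mem_map_of_mem (Fin.castAddEmb t) (Finset.mem_univ a)
    · exact Finset.mem_map_of_mem (Fin.natAddEmb t) (Finset.mem_univ a)
  · intro j
    fin_cases j <;> simp [bundleVal_unit]

/-- for every ρ < 2 the share ρ·MMS-bar is not feasible ex-post for
additive cost functions over chores with arbitrary responsibilities: there is an
instance in which every assignment of all chores gives some agent cost exceeding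
ρ·MMS(c_i, b̌_i), where b̌ = 1/⌈1/b⌉. -/
theorem rho_MMSbar_infeasible_chores (ρ : ℝ) (hρ : ρ < 2) :
    ∃ (n m : ℕ) (c : Fin n → Fin m → ℝ) (b : Fin n → ℝ),
      (∀ i j, 0 ≤ c i j) ∧ (∀ i, 0 < b i ∧ b i < 1) ∧ (∑ i, b i = 1) ∧
      ∀ A : Fin n → Finset (Fin m), IsPartition A →
        ∃ i, ρ * MMSc (c i) ⌈1 / b i⌉₊ < bundleVal (c i) (A i) := by
  -- Shares are nonnegative, so `ρ` may be replaced by the nonnegative `r = max ρ 0`.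
  obtain ⟨r, hr0, hr2, hρr⟩ : ∃ r : ℝ, 0 ≤ r ∧ r < 2 ∧ ρ ≤ r :=
    ⟨max ρ 0, le_max_right _ _, max_lt hρ two_pos, le_max_left _ _⟩
  obtain ⟨t, ht⟩ := exists_nat_gt (1 / (2 - r))
  have htr : 1 < (t : ℝ) * (2 - r) := (div_lt_iff₀ (by linarith)).1 ht
  have ht1 : (1 : ℝ) ≤ t := by
    have : 0 < t := by
      rcases Nat.eq_zero_or_pos t with h | h
      · subst h
        norm_num at htr
      · exact h
    exact_mod_cast this
  have hK : (2 : ℝ) ≤ (t : ℝ) + t := by linarith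
  have hinv0 : 0 < 1 / ((t : ℝ) + t) := by positivity
  have hinv : 1 / ((t : ℝ) + t) ≤ 1 / 2 := one_div_le_one_div_of_le two_pos hK
  have hceil0 : ⌈1 / (1 - 1 / ((t : ℝ) + t))⌉₊ = 2 := by
    rw [Nat.ceil_eq_iff two_ne_zero]
    constructor
    · rw [lt_div_iff₀ (by linarith)]
      push_cast
      linarith
    · rw [div_le_iff₀ (by linarith)]
      push_cast
      linarith
  have hceil1 : ⌈1 / (1 / ((t : ℝ) + t))⌉₊ = t + t := by
    rw [one_div_one_div]
    exact_mod_cast Nat.ceil_natCast (R := ℝ) (t + t)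
  refine ⟨2, t + t, fun _ _ => 1, ![1 - 1 / ((t : ℝ) + t), 1 / ((t : ℝ) + t)],
    fun _ _ => zero_le_one, ?_, ?_, ?_⟩
  · intro i
    fin_cases i
    · exact ⟨by simp only [Fin.zero_eta, Matrix.cons_val_zero]; linarith,
        by simp only [Fin.zero_eta, Matrix.cons_val_zero]; linarith⟩
    · exact ⟨hinv0, hinv.trans_lt (by norm_num)⟩
  · simp [Fin.sum_univ_two]
  · intro A hA
    by_contra! hcon
    have h0 := hcon 0
    have h1 := hcon 1
    simp only [Matrix.cons_val_zero, Matrix.cons_val_one] at h0 h1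
    rw [hceil0, bundleVal_unit] at h0
    rw [hceil1, bundleVal_unit] at h1
    have n0 := MMSc_nonneg (c := fun _ : Fin (t + t) => (1 : ℝ)) (fun _ => zero_le_one) 2
    have n1 := MMSc_nonneg (c := fun _ : Fin (t + t) => (1 : ℝ)) (fun _ => zero_le_one) (t + t)
    have b0 : ((A 0).card : ℝ) ≤ r * t :=
      h0.trans (mul_le_mul hρr (MMSc_unit_two_le t) n0 hr0)
    have b1 : ((A 1).card : ℝ) ≤ r * 1 :=
      h1.trans (mul_le_mul hρr (MMSc_unit_self_le (t + t)) n1 hr0)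
    have c1 : (A 1).card ≤ 1 := by
      have : ((A 1).card : ℝ) < 2 := by linarith
      have : (A 1).card < 2 := by exact_mod_cast this
      omega
    have hcov : A 0 ∪ A 1 = univ := by
      ext e
      obtain ⟨i, hi⟩ := hA.2 e
      fin_cases i
      · simpa using Or.inl hi
      · simpa using Or.inr hi
    have hcard : t + t ≤ (A 0).card + (A 1).card := by
      have := Finset.card_union_le (A 0) (A 1)
      rwa [hcov, Finset.card_univ, Fintype.card_fin] at this
    have hfin : (t : ℝ) + t ≤ (A 0).card + 1 := by
      exact_mod_cast hcard.trans (Nat.add_le_add_left c1 _)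
    linarith
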